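/- Let X be a Banach space. The set PAP₀(ℝ,X) of bounded continuous functions φ : ℝ → X with lim_{L→∞} (1/(2L)) ∫_{-L}^L ‖φ(t)‖ dt = 0 is a closed linear subspace of the Banach space of bounded continuous functions BC(ℝ,X) with the supremum norm. -/

import Mathlib

open Filter

/-- A bounded continuous function has vanishing Cesàro mean of its norm. -/
def IsPAP0 {X : Type*} [NormedAddCommGroup X]
    (φ : BoundedContinuousFunction ℝ X) : Prop :=
  Tendsto (fun L : ℝ => (1 / (2 * L)) * ∫ t in (-L)..L, ‖φ t‖) atTop (nhds 0)

/-! The mean `φ ↦ ⨍ t, ‖φ t‖ ∂μ` over a finite measure is a seminorm dominated by the supremum norm.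
A family of seminorms dominated by a single continuous seminorm is equicontinuous, and the vectors
on which it tends to zero form a submodule, closed by equicontinuity. -/

open MeasureTheory Topology
open scoped BoundedContinuousFunction

section TendstoZero

variable {ι 𝕜 E : Type*} [SeminormedRing 𝕜] [AddCommGroup E] [Module 𝕜 E]

/-- The submodule of those `x` for which `p i x` tends to zero along `l`, for a family `p` of
seminorms. For the mean norms over `[-L, L]` it is `PAP₀`. -/
def tendstoZeroSubmodule (p : ι → Seminorm 𝕜 E) (l : Filter ι) : Submodule 𝕜 E where
  carrier := {x | Tendsto (fun i => p i x) l (𝓝 0)}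
  zero_mem' := by simp only [Set.mem_ofPred_eq, map_zero, tendsto_const_nhds]
  add_mem' {x y} hx hy :=
    squeeze_zero (fun i => apply_nonneg (p i) (x + y)) (fun i => map_add_le_add (p i) x y)
      (by simpa only [add_zero] using Tendsto.add hx hy)
  smul_mem' c x hx := by
    simpa only [Set.mem_ofPred_eq, map_smul_eq_mul, mul_zero] using Tendsto.const_mul ‖c‖ hx

variable [TopologicalSpace E]

theorem isClosed_tendstoZeroSubmodule {p : ι → Seminorm 𝕜 E}
    (hp : Equicontinuous fun i => ⇑(p i)) (l : Filter ι) :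
    IsClosed (tendstoZeroSubmodule p l : Set E) :=
  hp.isClosed_setOfPred_tendsto continuous_const

theorem equicontinuous_of_seminorm_le [ContinuousSub E] {p : ι → Seminorm 𝕜 E}
    {q : Seminorm 𝕜 E} (hq : Continuous q) (hpq : ∀ i, p i ≤ q) :
    Equicontinuous fun i => ⇑(p i) := by
  intro x
  have hq_sub : Tendsto (fun y => q (x - y)) (𝓝 x) (𝓝 0) :=
    (hq.comp (continuous_const.sub continuous_id)).tendsto' x 0 (by simp)
  refine Metric.equicontinuousAt_of_continuity_modulus _ hq_sub _ (.of_forall fun y i => ?_)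
  calc dist (p i x) (p i y) ≤ p i (x - y) := abs_sub_map_le_sub (p i) x y
    _ ≤ q (x - y) := hpq i (x - y)

end TendstoZero

section MeanNorm

variable {α X : Type*} [MeasurableSpace α] [SeminormedAddCommGroup X] (μ : Measure α)

theorem average_norm_smul {𝕜 : Type*} [NormedField 𝕜] [NormedSpace 𝕜 X] (c : 𝕜) (f : α → X) :
    ⨍ t, ‖c • f t‖ ∂μ = ‖c‖ * ⨍ t, ‖f t‖ ∂μ := by
  simp only [average, norm_smul, integral_const_mul]

variable {μ} in
theorem average_norm_add_le {f g : α → X} (hf : Integrable (fun t => ‖f t‖) μ)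
    (hg : Integrable (fun t => ‖g t‖) μ) :
    ⨍ t, ‖f t + g t‖ ∂μ ≤ ⨍ t, ‖f t‖ ∂μ + ⨍ t, ‖g t‖ ∂μ := by
  have hint : ∫ t, ‖f t + g t‖ ∂μ ≤ ∫ t, ‖f t‖ ∂μ + ∫ t, ‖g t‖ ∂μ := by
    rw [← integral_add hf hg]
    exact integral_mono_of_nonneg (.of_forall fun t => norm_nonneg _) (hf.add hg)
      (.of_forall fun t => norm_add_le (f t) (g t))
  simp only [average_eq, ← smul_add]
  gcongr

variable [TopologicalSpace α] [OpensMeasurableSpace α] [IsFiniteMeasure μ]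

theorem integrable_norm_boundedContinuousFunction (φ : α →ᵇ X) :
    Integrable (fun t => ‖φ t‖) μ :=
  φ.normComp.integrable μ

theorem average_norm_le_norm (φ : α →ᵇ X) : ⨍ t, ‖φ t‖ ∂μ ≤ ‖φ‖ := by
  have hint : ∫ t, ‖φ t‖ ∂μ ≤ ‖φ‖ * μ.real Set.univ := by
    simpa only [integral_const, smul_eq_mul, mul_comm] using
      integral_mono (integrable_norm_boundedContinuousFunction μ φ) (integrable_const ‖φ‖)
        φ.norm_coe_le_norm
  rw [average_eq, smul_eq_mul, inv_mul_eq_div]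
  exact div_le_of_le_mul₀ measureReal_nonneg (norm_nonneg φ) hint

variable (𝕜 : Type*) [NormedField 𝕜] [NormedSpace 𝕜 X]

/-- The mean of the norm over a finite measure, as a seminorm on bounded continuous functions.
For the zero measure it is the zero seminorm. -/
noncomputable def meanNorm : Seminorm 𝕜 (α →ᵇ X) :=
  .of (fun φ => ⨍ t, ‖φ t‖ ∂μ)
    (fun φ ψ => average_norm_add_le (integrable_norm_boundedContinuousFunction μ φ)
      (integrable_norm_boundedContinuousFunction μ ψ))
    (fun c φ => average_norm_smul μ c φ)

theorem equicontinuous_meanNorm {ι : Type*} (ν : ι → Measure α) [∀ i, IsFiniteMeasure (ν i)] :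
    Equicontinuous fun i => ⇑(meanNorm (ν i) 𝕜 : Seminorm 𝕜 (α →ᵇ X)) :=
  equicontinuous_of_seminorm_le (q := normSeminorm 𝕜 (α →ᵇ X)) continuous_norm
    fun i => average_norm_le_norm (ν i)

end MeanNorm

theorem isPAP0_iff_tendsto_average {X : Type*} [NormedAddCommGroup X] (φ : ℝ →ᵇ X) :
    IsPAP0 φ ↔ Tendsto (fun L : ℝ => ⨍ t in (-L)..L, ‖φ t‖) atTop (𝓝 0) := by
  simp only [IsPAP0, interval_average_eq, sub_neg_eq_add, ← two_mul, one_div, smul_eq_mul]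

theorem stmt6_general {ι α 𝕜 X : Type*} [TopologicalSpace α] [MeasurableSpace α]
    [OpensMeasurableSpace α] [NormedField 𝕜] [SeminormedAddCommGroup X] [NormedSpace 𝕜 X]
    (μ : ι → Measure α) [∀ i, IsFiniteMeasure (μ i)] (l : Filter ι) :
    let N : Set (α →ᵇ X) := {φ | Tendsto (fun i => ⨍ t, ‖φ t‖ ∂μ i) l (𝓝 0)}
    IsClosed N ∧ 0 ∈ N ∧ (∀ φ ψ, φ ∈ N → ψ ∈ N → φ + ψ ∈ N) ∧
      ∀ (c : 𝕜) (φ), φ ∈ N → c • φ ∈ N :=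
  let P : Submodule 𝕜 (α →ᵇ X) := tendstoZeroSubmodule (fun i => meanNorm (μ i) 𝕜) l
  ⟨isClosed_tendstoZeroSubmodule (equicontinuous_meanNorm 𝕜 μ) l, P.zero_mem,
    fun _ _ => P.add_mem, fun c _ => P.smul_mem c⟩

/-- `PAP₀(ℝ,X)` is a closed linear subspace of `BC(ℝ,X)`. -/
theorem stmt6 {X : Type*} [NormedAddCommGroup X] [NormedSpace ℝ X] :
    IsClosed {φ : BoundedContinuousFunction ℝ X | IsPAP0 φ} ∧
      IsPAP0 (0 : BoundedContinuousFunction ℝ X) ∧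
      (∀ φ ψ : BoundedContinuousFunction ℝ X, IsPAP0 φ → IsPAP0 ψ → IsPAP0 (φ + ψ)) ∧
      (∀ (c : ℝ) (φ : BoundedContinuousFunction ℝ X), IsPAP0 φ → IsPAP0 (c • φ)) := by
  have (L : ℝ) : IsFiniteMeasure (volume.restrict (Set.uIoc (-L) L)) :=
    Real.isFiniteMeasure_restrict_Ioc _ _
  simp only [isPAP0_iff_tendsto_average]
  exact stmt6_general (fun L : ℝ => volume.restrict (Set.uIoc (-L) L)) atTop
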